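/- arXiv:0801.4259 — 2 statements merged into one kernel-verified Lean document; each statement's English description precedes it below -/
import Mathlib

section
/- Let H be a complex Hilbert space, M a von Neumann algebra acting on H, and ξ₀ a cyclic and separating vector for M. An orthogonal projection p on H is a central projection of M (i.e. p ∈ M and p commutes with every element of M) if and only if p(P♯) ⊆ P♯ and (1 − p)(P♯) ⊆ P♯. -/
/-!
Let `p` and `1 - p` preserve `P♯`, and suppose `ζ` and `e ξ₀ - ζ` lie in `P♯` for a projection
`e ∈ M`. The Cauchy–Schwarz inequality for positive operators of `M`, tested on `M′ ξ₀` and passed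
to the closure `P♯`, gives `|⟪v, ζ⟫|² ≤ ⟪v, e v⟫ ⟪ξ₀, ζ⟫` for all `v`, whence `e ζ = ζ`. Taking
`ζ = p e ξ₀`, and arguing likewise for `1 - e`, yields `p e ξ₀ = e p ξ₀`. As the projections of `M`
span a norm-dense subspace, `p a ξ₀ = a p ξ₀` for every `a ∈ M`, that is, `p ∈ M′`.

Elements of `P♯` satisfy `⟪ξ₀, y ζ⟫ = ⟪ζ, y ξ₀⟫` for `y ∈ M′`. For `ζ = p e ξ₀` this becomes
`y p = p* y` because `ξ₀` separates `M′`. Taking `y = 1` shows `p = p*`, so `p` also commutes with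
`M′` and belongs to `M′′ = M`.
-/

open scoped InnerProductSpace
open Filter

variable {H : Type*} [NormedAddCommGroup H] [InnerProductSpace ℂ H] [CompleteSpace H]

/-- The positive cone `P♯`: the closure in `H` of `{a ξ₀ : a ∈ M, a positive}`. -/
def sharpCone (M : VonNeumannAlgebra H) (ξ₀ : H) : Set H :=
  closure {ζ : H | ∃ a : H →L[ℂ] H, a ∈ M ∧ a.IsPositive ∧ a ξ₀ = ζ}

/-- `ξ₀` is a cyclic vector for `M`: the linear span of `{x ξ₀ : x ∈ M}` is dense in `H`. -/
def IsCyclicVector (M : VonNeumannAlgebra H) (ξ₀ : H) : Prop :=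
  Dense ((Submodule.span ℂ ((fun x : H →L[ℂ] H => x ξ₀) '' (M : Set (H →L[ℂ] H)))) : Set H)

/-- `ξ₀` is a separating vector for `M`: `x ∈ M` and `x ξ₀ = 0` imply `x = 0`. -/
def IsSeparatingVector (M : VonNeumannAlgebra H) (ξ₀ : H) : Prop :=
  ∀ x : H →L[ℂ] H, x ∈ M → x ξ₀ = 0 → x = 0

section CStarAlgebra

variable {A : Type*} [CStarAlgebra A] [PartialOrder A] [StarOrderedRing A]

theorem norm_sub_algebraMap_half_norm_le {b : A} (hb : 0 ≤ b) :
    ‖b - algebraMap ℝ A (‖b‖ / 2)‖ ≤ ‖b‖ / 2 := by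
  have hcfc : b - algebraMap ℝ A (‖b‖ / 2) = cfc (fun x : ℝ => x - ‖b‖ / 2) b := by
    rw [cfc_sub .., cfc_const _ b, cfc_id' ℝ b]
  rw [hcfc]
  nontriviality A
  refine norm_cfc_le (by positivity) fun x hx => ?_
  have h₀ : 0 ≤ x := spectrum_nonneg_of_nonneg hb hx
  have h₁ : ‖x‖ ≤ ‖b‖ := spectrum.norm_le_norm_of_mem hx
  rw [Real.norm_eq_abs, abs_le] at *
  constructor <;> linarith

theorem norm_sub_half_norm_smul_symmetry_le {a u : A} (hu : u * u = 1) (hu' : IsSelfAdjoint u)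
    (hau : a * u = CFC.abs a) : ‖a - (‖a‖ / 2) • u‖ ≤ ‖a‖ / 2 := by
  have hu_unitary : u ∈ unitary A := by simp [Unitary.mem_iff, hu'.star_eq, hu]
  calc ‖a - (‖a‖ / 2) • u‖ = ‖(a - (‖a‖ / 2) • u) * u‖ :=
        (CStarRing.norm_mul_mem_unitary _ hu_unitary).symm
    _ = ‖CFC.abs a - algebraMap ℝ A (‖CFC.abs a‖ / 2)‖ := by
        rw [sub_mul, hau, smul_mul_assoc, hu, CFC.norm_abs, Algebra.algebraMap_eq_smul_one]
    _ ≤ ‖CFC.abs a‖ / 2 := norm_sub_algebraMap_half_norm_le (CFC.abs_nonneg a)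
    _ = ‖a‖ / 2 := by rw [CFC.norm_abs]

end CStarAlgebra

section Projections

variable {M : VonNeumannAlgebra H}

theorem mem_iff_forall_commutant_mul_eq {a : H →L[ℂ] H} :
    a ∈ M ↔ ∀ y ∈ M.commutant, y * a = a * y := by
  rw [← VonNeumannAlgebra.mem_commutant_iff, M.commutant_commutant]

theorem commutant_apply_comm {a y : H →L[ℂ] H} (ha : a ∈ M) (hy : y ∈ M.commutant) (v : H) :
    y (a v) = a (y v) :=
  congr($(mem_iff_forall_commutant_mul_eq.mp ha y hy) v)

theorem negPart_mem_vonNeumannAlgebra {a : H →L[ℂ] H} (ha : a ∈ M) : a⁻ ∈ M := by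
  rw [mem_iff_forall_commutant_mul_eq] at *
  intro y hy
  exact ((show Commute a y from (ha y hy).symm).cfcₙ_real _).eq.symm

theorem starProjection_ker_mem_vonNeumannAlgebra {a : H →L[ℂ] H} (ha : a ∈ M) :
    a.ker.starProjection ∈ M := by
  rw [VonNeumannAlgebra.IsStarProjection.mem_iff isStarProjection_starProjection]
  intro y hy
  rw [Submodule.range_starProjection, Module.End.mem_invtSubmodule]
  intro v hv
  change a (y v) = 0
  rw [← commutant_apply_comm ha hy, show a v = 0 from hv, map_zero]

theorem exists_isStarProjection_mul_eq_abs {a : H →L[ℂ] H} (ha : a ∈ M) (ha' : IsSelfAdjoint a) :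
    ∃ e ∈ M, IsStarProjection e ∧ a * (2 * e - 1) = CFC.abs a := by
  set e := (a⁻).ker.starProjection
  have he : IsStarProjection e := isStarProjection_starProjection
  have hneg : a⁻ * e = 0 := by
    ext v
    exact Submodule.starProjection_apply_mem (a⁻).ker v
  have hpos : e * a⁺ = a⁺ := by
    ext v
    exact Submodule.starProjection_eq_self_iff.mpr congr($(CFC.negPart_mul_posPart a) v)
  have hpos' : a⁺ * e = a⁺ := by
    simpa [he.isSelfAdjoint.star_eq, (CFC.posPart_nonneg a).isSelfAdjoint.star_eq]
      using congr(star $hpos)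
  refine ⟨e, starProjection_ker_mem_vonNeumannAlgebra (negPart_mem_vonNeumannAlgebra ha), he, ?_⟩
  calc a * (2 * e - 1) = (a⁺ - a⁻) * (2 * e - 1) := by rw [CFC.posPart_sub_negPart a]
    _ = 2 • (a⁺ * e) - a⁺ - (2 • (a⁻ * e) - a⁻) := by noncomm_ring
    _ = a⁺ + a⁻ := by rw [hpos', hneg]; noncomm_ring
    _ = CFC.abs a := CFC.posPart_add_negPart a

-- Each step subtracts `(‖a‖ / 2) • u`, with `u` the symmetry taking `a` to `|a|`:
-- the remainder times `u` is `|a| - ‖a‖ / 2`, of norm at most `‖a‖ / 2`.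
theorem exists_mem_span_isStarProjection_norm_sub_le (n : ℕ) {a : H →L[ℂ] H} (ha : a ∈ M)
    (ha' : IsSelfAdjoint a) :
    ∃ s ∈ Submodule.span ℂ {e | e ∈ M ∧ IsStarProjection e}, ‖a - s‖ ≤ ‖a‖ / 2 ^ n := by
  set V := Submodule.span ℂ {e | e ∈ M ∧ IsStarProjection e}
  have hV {b : H →L[ℂ] H} (hb : b ∈ V) : b ∈ M :=
    Submodule.span_le (p := M.toStarSubalgebra.toSubalgebra.toSubmodule).mpr (fun _ he => he.1) hb
  induction n generalizing a with
  | zero => exact ⟨0, zero_mem _, by simp⟩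
  | succ n ih =>
    obtain ⟨e, he, he', hea⟩ := exists_isStarProjection_mul_eq_abs ha ha'
    set u := 2 * e - 1 with hu
    have hu_sa : IsSelfAdjoint u := by
      rw [hu, two_mul]
      exact (he'.isSelfAdjoint.add he'.isSelfAdjoint).sub (.one _)
    have hu_sq : u * u = 1 := by
      have := (Unitary.mem_iff.mp he'.two_mul_sub_one_mem_unitary).1
      rwa [← hu, hu_sa.star_eq] at this
    have heV : e ∈ V := Submodule.subset_span ⟨he, he'⟩
    have huV : (‖a‖ / 2) • u ∈ V := by
      refine Submodule.smul_of_tower_mem _ _ ?_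
      rw [hu, two_mul]
      exact sub_mem (add_mem heV heV) (Submodule.subset_span ⟨one_mem M, .one _⟩)
    have hsa : IsSelfAdjoint (a - (‖a‖ / 2) • u) := ha'.sub ((IsSelfAdjoint.all _).smul hu_sa)
    obtain ⟨s, hs, hs'⟩ := ih (sub_mem ha (hV huV)) hsa
    refine ⟨(‖a‖ / 2) • u + s, add_mem huV hs, ?_⟩
    calc ‖a - ((‖a‖ / 2) • u + s)‖ = ‖a - (‖a‖ / 2) • u - s‖ := by rw [sub_sub]
      _ ≤ ‖a - (‖a‖ / 2) • u‖ / 2 ^ n := hs'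
      _ ≤ ‖a‖ / 2 / 2 ^ n := by gcongr; exact norm_sub_half_norm_smul_symmetry_le hu_sq hu_sa hea
      _ = ‖a‖ / 2 ^ (n + 1) := by rw [div_div, pow_succ']

theorem mem_closure_span_isStarProjection {a : H →L[ℂ] H} (ha : a ∈ M) :
    a ∈ closure (Submodule.span ℂ {e | e ∈ M ∧ IsStarProjection e} : Set (H →L[ℂ] H)) := by
  set V := Submodule.span ℂ {e | e ∈ M ∧ IsStarProjection e}
  have hsa : ∀ b ∈ M, IsSelfAdjoint b → b ∈ V.topologicalClosure := by
    intro b hb hb'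
    choose s hs hbs using fun n : ℕ => exists_mem_span_isStarProjection_norm_sub_le n hb hb'
    refine mem_closure_of_tendsto (b := atTop) (f := s) ?_ (.of_forall hs)
    rw [tendsto_iff_norm_sub_tendsto_zero]
    refine squeeze_zero (fun _ => norm_nonneg _) (fun n => (norm_sub_rev _ _).trans_le (hbs n)) ?_
    exact tendsto_const_nhds.div_atTop (tendsto_pow_atTop_atTop_of_one_lt one_lt_two)
  let N := M.toStarSubalgebra
  have hN : (⟨a, ha⟩ : N) ∈ Submodule.span ℂ (selfAdjoint N : Set N) := by
    rw [span_selfAdjoint]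
    exact Submodule.mem_top
  refine Submodule.span_le (p := V.topologicalClosure.comap N.subtype.toLinearMap).mpr ?_ hN
  intro b hb
  exact hsa b b.2 (congrArg Subtype.val hb)

theorem eq_of_eq_on_isStarProjection {F : Type*} [AddCommMonoid F] [Module ℂ F]
    [TopologicalSpace F] [T2Space F] {f g : (H →L[ℂ] H) →L[ℂ] F}
    (hfg : ∀ e ∈ M, IsStarProjection e → f e = g e) {a : H →L[ℂ] H} (ha : a ∈ M) : f a = g a :=
  ContinuousLinearMap.eqOn_closure_span (fun e he => hfg e he.1 he.2)
    (mem_closure_span_isStarProjection ha)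

end Projections

section Vectors

variable {M : VonNeumannAlgebra H} {ξ : H}

theorem IsCyclicVector.dense_image (h : IsCyclicVector M ξ) :
    Dense ((fun x : H →L[ℂ] H => x ξ) '' (M : Set (H →L[ℂ] H))) :=
  h.mono (Submodule.span_le (p := M.toStarSubalgebra.toSubalgebra.toSubmodule.map
    (ContinuousLinearMap.apply ℂ H ξ).toLinearMap) |>.mpr subset_rfl)

theorem IsCyclicVector.induction {P : H → Prop} (h : IsCyclicVector M ξ) (hP : IsClosed {v | P v})
    (hM : ∀ x ∈ M, P (x ξ)) (v : H) : P v :=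
  h.dense_image.induction (by rintro _ ⟨x, hx, rfl⟩; exact hM x hx) hP v

theorem IsCyclicVector.isSeparatingVector_commutant (h : IsCyclicVector M ξ) :
    IsSeparatingVector M.commutant ξ := by
  intro y hy hyξ
  ext v
  refine h.induction (isClosed_eq (by fun_prop) (by fun_prop)) (fun a ha => ?_) v
  rw [commutant_apply_comm ha hy, hyξ, map_zero, zero_apply]

theorem IsSeparatingVector.isCyclicVector_commutant (h : IsSeparatingVector M ξ) :
    IsCyclicVector M.commutant ξ := by
  set K := (Submodule.span ℂ
    ((fun y : H →L[ℂ] H => y ξ) '' (M.commutant : Set (H →L[ℂ] H)))).topologicalClosure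
    with hK
  have : CompleteSpace K := (Submodule.isClosed_topologicalClosure _).completeSpace_coe
  have hξ : ξ ∈ K :=
    Submodule.le_topologicalClosure _ (Submodule.subset_span ⟨1, one_mem M.commutant, rfl⟩)
  have hKM : K.starProjection ∈ M := by
    rw [VonNeumannAlgebra.IsStarProjection.mem_iff isStarProjection_starProjection]
    intro y hy
    rw [Submodule.range_starProjection, Module.End.mem_invtSubmodule]
    refine Submodule.topologicalClosure_minimal _ (Submodule.span_le.mpr ?_)
      ((Submodule.isClosed_topologicalClosure _).preimage y.continuous)
    rintro _ ⟨z, hz, rfl⟩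
    exact Submodule.le_topologicalClosure _ (Submodule.subset_span ⟨y * z, mul_mem hy hz, rfl⟩)
  have hK_one : 1 - K.starProjection = 0 :=
    h _ (sub_mem (one_mem M) hKM) (by simp [Submodule.starProjection_eq_self_iff.mpr hξ])
  rw [IsCyclicVector, Submodule.dense_iff_topologicalClosure_eq_top, ← hK,
    ← Submodule.range_starProjection K, ← sub_eq_zero.mp hK_one]
  exact LinearMap.range_id

end Vectors

section SharpCone

open scoped ComplexOrder

variable {M : VonNeumannAlgebra H} {ξ₀ : H}

theorem apply_mem_sharpCone {a : H →L[ℂ] H} (ha : a ∈ M) (hpos : a.IsPositive) :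
    a ξ₀ ∈ sharpCone M ξ₀ :=
  subset_closure ⟨a, ha, hpos, rfl⟩

theorem sharpCone_induction {P : H → Prop} (hP : IsClosed {ζ | P ζ})
    (hM : ∀ a ∈ M, a.IsPositive → P (a ξ₀)) {ζ : H} (hζ : ζ ∈ sharpCone M ξ₀) : P ζ :=
  closure_minimal (by rintro _ ⟨a, ha, hpos, rfl⟩; exact hM a ha hpos) hP hζ

theorem inner_commutant_apply_nonneg {y : H →L[ℂ] H} (hy : y ∈ M.commutant) {ζ : H}
    (hζ : ζ ∈ sharpCone M ξ₀) : 0 ≤ ⟪y ξ₀, y ζ⟫_ℂ := by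
  have hclosed : IsClosed {ζ : H | 0 ≤ ⟪y ξ₀, y ζ⟫_ℂ} := isClosed_le (by fun_prop) (by fun_prop)
  refine sharpCone_induction hclosed (fun a ha hpos => ?_) hζ
  rw [commutant_apply_comm ha hy]
  exact hpos.inner_nonneg_right _

theorem inner_commutant_apply_eq {y : H →L[ℂ] H} (hy : y ∈ M.commutant) {ζ : H}
    (hζ : ζ ∈ sharpCone M ξ₀) : ⟪ξ₀, y ζ⟫_ℂ = ⟪ζ, y ξ₀⟫_ℂ := by
  have hclosed : IsClosed {ζ : H | ⟪ξ₀, y ζ⟫_ℂ = ⟪ζ, y ξ₀⟫_ℂ} :=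
    isClosed_eq (by fun_prop) (by fun_prop)
  refine sharpCone_induction hclosed (fun a ha hpos => ?_) hζ
  rw [commutant_apply_comm ha hy, hpos.inner_left_eq_inner_right]

theorem norm_inner_sq_le_of_isPositive {a : H →L[ℂ] H} (ha : a.IsPositive) (v w : H) :
    ‖⟪v, a w⟫_ℂ‖ ^ 2 ≤ (⟪v, a v⟫_ℂ).re * (⟪w, a w⟫_ℂ).re := by
  obtain ⟨s, rfl⟩ := CStarAlgebra.nonneg_iff_eq_star_mul_self.mp
    (a.nonneg_iff_isPositive.mpr ha)
  have hs (x y : H) : ⟪x, (star s * s) y⟫_ℂ = ⟪s x, s y⟫_ℂ :=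
    s.adjoint_inner_right x (s y)
  rw [hs, hs, hs]
  calc ‖⟪s v, s w⟫_ℂ‖ ^ 2 = ‖⟪s v, s w⟫_ℂ‖ * ‖⟪s w, s v⟫_ℂ‖ := by rw [sq, norm_inner_symm (s w)]
    _ ≤ (⟪s v, s v⟫_ℂ).re * (⟪s w, s w⟫_ℂ).re := inner_mul_inner_self_le (s v) (s w)

theorem norm_inner_sq_le_of_mem_sharpCone {y : H →L[ℂ] H} (hy : y ∈ M.commutant) {ζ : H}
    (hζ : ζ ∈ sharpCone M ξ₀) :
    ‖⟪y ξ₀, ζ⟫_ℂ‖ ^ 2 ≤ (⟪y ξ₀, y ζ⟫_ℂ).re * (⟪ξ₀, ζ⟫_ℂ).re := by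
  have hclosed :
      IsClosed {ζ : H | ‖⟪y ξ₀, ζ⟫_ℂ‖ ^ 2 ≤ (⟪y ξ₀, y ζ⟫_ℂ).re * (⟪ξ₀, ζ⟫_ℂ).re} :=
    isClosed_le (by fun_prop) (by fun_prop)
  refine sharpCone_induction hclosed (fun a ha hpos => ?_) hζ
  rw [commutant_apply_comm ha hy]
  exact norm_inner_sq_le_of_isPositive hpos _ _

theorem IsSeparatingVector.norm_inner_sq_le_of_sub_mem_sharpCone (hsep : IsSeparatingVector M ξ₀)
    {a : H →L[ℂ] H} (ha : a ∈ M) {ζ : H} (hζ : ζ ∈ sharpCone M ξ₀)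
    (haζ : a ξ₀ - ζ ∈ sharpCone M ξ₀) (v : H) :
    ‖⟪v, ζ⟫_ℂ‖ ^ 2 ≤ (⟪v, a v⟫_ℂ).re * (⟪ξ₀, ζ⟫_ℂ).re := by
  have hclosed : IsClosed {v : H | ‖⟪v, ζ⟫_ℂ‖ ^ 2 ≤ (⟪v, a v⟫_ℂ).re * (⟪ξ₀, ζ⟫_ℂ).re} :=
    isClosed_le (by fun_prop) (by fun_prop)
  refine hsep.isCyclicVector_commutant.induction hclosed (fun y hy => ?_) v
  have hζ_nonneg : 0 ≤ (⟪ξ₀, ζ⟫_ℂ).re :=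
    (Complex.le_def.mp (inner_commutant_apply_nonneg (one_mem M.commutant) hζ)).1
  have hle : (⟪y ξ₀, y ζ⟫_ℂ).re ≤ (⟪y ξ₀, a (y ξ₀)⟫_ℂ).re := by
    have := (Complex.le_def.mp (inner_commutant_apply_nonneg hy haζ)).1
    rwa [map_sub, inner_sub_right, Complex.sub_re, Complex.zero_re, sub_nonneg,
      commutant_apply_comm ha hy] at this
  exact (norm_inner_sq_le_of_mem_sharpCone hy hζ).trans (mul_le_mul_of_nonneg_right hle hζ_nonneg)

theorem IsSeparatingVector.isStarProjection_apply_eq_self (hsep : IsSeparatingVector M ξ₀)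
    {e : H →L[ℂ] H} (he : e ∈ M) (he' : IsStarProjection e) {ζ : H} (hζ : ζ ∈ sharpCone M ξ₀)
    (heζ : e ξ₀ - ζ ∈ sharpCone M ξ₀) : e ζ = ζ := by
  have horth (v : H) (hv : e v = 0) : ⟪v, ζ⟫_ℂ = 0 := by
    have hbound := hsep.norm_inner_sq_le_of_sub_mem_sharpCone he hζ heζ v
    rw [hv, inner_zero_right, Complex.zero_re, zero_mul] at hbound
    exact norm_eq_zero.mp (pow_eq_zero_iff two_ne_zero |>.mp (hbound.antisymm (by positivity)))
  have hzero : (1 - e) ζ = 0 := by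
    refine ext_inner_left ℂ fun v => ?_
    calc ⟪v, (1 - e) ζ⟫_ℂ = ⟪(1 - e) v, ζ⟫_ℂ := (he'.one_sub.isSelfAdjoint.isSymmetric v ζ).symm
      _ = 0 := horth _ congr($(he'.mul_one_sub_self) v)
      _ = ⟪v, 0⟫_ℂ := (inner_zero_right v).symm
  exact (sub_eq_zero.mp hzero).symm

variable {p : H →L[ℂ] H}

theorem IsSeparatingVector.map_isStarProjection_apply (hsep : IsSeparatingVector M ξ₀)
    (hp : Set.MapsTo p (sharpCone M ξ₀) (sharpCone M ξ₀))
    (hp' : Set.MapsTo ⇑(1 - p) (sharpCone M ξ₀) (sharpCone M ξ₀))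
    {e : H →L[ℂ] H} (he : e ∈ M) (he' : IsStarProjection e) : p (e ξ₀) = e (p ξ₀) := by
  have hfix (f : H →L[ℂ] H) (hf : f ∈ M) (hf' : IsStarProjection f) :
      f (p (f ξ₀)) = p (f ξ₀) :=
    have hfξ : f ξ₀ ∈ sharpCone M ξ₀ := apply_mem_sharpCone hf (.of_isStarProjection hf')
    hsep.isStarProjection_apply_eq_self hf hf' (hp hfξ) (hp' hfξ)
  have he_compl : e (p ((1 - e) ξ₀)) = 0 := by
    rw [← hfix (1 - e) (sub_mem (one_mem M) he) he'.one_sub]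
    exact congr($(he'.mul_one_sub_self) _)
  calc p (e ξ₀) = e (p (e ξ₀)) + e (p ((1 - e) ξ₀)) := by rw [hfix e he he', he_compl, add_zero]
    _ = e (p ξ₀) := by simp

theorem IsSeparatingVector.map_apply (hsep : IsSeparatingVector M ξ₀)
    (hp : Set.MapsTo p (sharpCone M ξ₀) (sharpCone M ξ₀))
    (hp' : Set.MapsTo ⇑(1 - p) (sharpCone M ξ₀) (sharpCone M ξ₀))
    {a : H →L[ℂ] H} (ha : a ∈ M) : p (a ξ₀) = a (p ξ₀) :=
  eq_of_eq_on_isStarProjection (f := p ∘L .apply ℂ H ξ₀) (g := .apply ℂ H (p ξ₀))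
    (fun _ he he' => hsep.map_isStarProjection_apply hp hp' he he') ha

theorem IsCyclicVector.mem_commutant_of_map_apply (hcyc : IsCyclicVector M ξ₀)
    (hp : ∀ a ∈ M, p (a ξ₀) = a (p ξ₀)) : p ∈ M.commutant := by
  rw [VonNeumannAlgebra.mem_commutant_iff]
  intro a ha
  ext v
  have hclosed : IsClosed {v : H | a (p v) = p (a v)} := isClosed_eq (by fun_prop) (by fun_prop)
  refine hcyc.induction hclosed (fun b hb => ?_) v
  calc a (p (b ξ₀)) = (a * b) (p ξ₀) := congr(a $(hp b hb))
    _ = p ((a * b) ξ₀) := (hp _ (mul_mem ha hb)).symm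

theorem IsCyclicVector.inner_commutant_apply_map_apply (hcyc : IsCyclicVector M ξ₀)
    (hpM : p ∈ M.commutant) (hp : Set.MapsTo p (sharpCone M ξ₀) (sharpCone M ξ₀))
    {y : H →L[ℂ] H} (hy : y ∈ M.commutant) (v : H) : ⟪ξ₀, y (p v)⟫_ℂ = ⟪p ξ₀, y v⟫_ℂ := by
  have hclosed : IsClosed {v : H | ⟪ξ₀, y (p v)⟫_ℂ = ⟪p ξ₀, y v⟫_ℂ} :=
    isClosed_eq (by fun_prop) (by fun_prop)
  refine hcyc.induction hclosed (fun a ha => ?_) v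
  refine eq_of_eq_on_isStarProjection (f := innerSL ℂ ξ₀ ∘L y ∘L p ∘L .apply ℂ H ξ₀)
    (g := innerSL ℂ (p ξ₀) ∘L y ∘L .apply ℂ H ξ₀) (fun e he he' => ?_) ha
  have heξ : e ξ₀ ∈ sharpCone M ξ₀ := apply_mem_sharpCone he (.of_isStarProjection he')
  calc ⟪ξ₀, y (p (e ξ₀))⟫_ℂ = ⟪p (e ξ₀), y ξ₀⟫_ℂ := inner_commutant_apply_eq hy (hp heξ)
    _ = ⟪e (p ξ₀), y ξ₀⟫_ℂ := by rw [commutant_apply_comm he hpM]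
    _ = ⟪p ξ₀, e (y ξ₀)⟫_ℂ := he'.isSelfAdjoint.isSymmetric _ _
    _ = ⟪p ξ₀, y (e ξ₀)⟫_ℂ := by rw [commutant_apply_comm he hy]

theorem IsCyclicVector.commutant_mul_eq_star_mul (hcyc : IsCyclicVector M ξ₀)
    (hpM : p ∈ M.commutant) (hp : Set.MapsTo p (sharpCone M ξ₀) (sharpCone M ξ₀))
    {y : H →L[ℂ] H} (hy : y ∈ M.commutant) : y * p = star p * y := by
  have hξ₀ : y (p ξ₀) = star p (y ξ₀) := by
    refine ext_inner_right ℂ fun v => ?_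
    calc ⟪y (p ξ₀), v⟫_ℂ = ⟪p ξ₀, star y v⟫_ℂ := (y.adjoint_inner_right _ _).symm
      _ = ⟪ξ₀, star y (p v)⟫_ℂ :=
        (hcyc.inner_commutant_apply_map_apply hpM hp (star_mem hy) v).symm
      _ = ⟪y ξ₀, p v⟫_ℂ := y.adjoint_inner_right _ _
      _ = ⟪star p (y ξ₀), v⟫_ℂ := (p.adjoint_inner_left _ _).symm
  exact sub_eq_zero.mp <| hcyc.isSeparatingVector_commutant _
    (sub_mem (mul_mem hy hpM) (mul_mem (star_mem hpM) hy)) (sub_eq_zero.mpr hξ₀)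

theorem IsSeparatingVector.isPositive_of_apply_mem_sharpCone (hsep : IsSeparatingVector M ξ₀)
    {c : H →L[ℂ] H} (hc : c ∈ M) (hcξ : c ξ₀ ∈ sharpCone M ξ₀) : c.IsPositive := by
  have hclosed : IsClosed {v : H | 0 ≤ ⟪v, c v⟫_ℂ} := isClosed_le (by fun_prop) (by fun_prop)
  have hnonneg (v : H) : 0 ≤ ⟪v, c v⟫_ℂ := by
    refine hsep.isCyclicVector_commutant.induction hclosed (fun y hy => ?_) v
    rw [← commutant_apply_comm hc hy]
    exact inner_commutant_apply_nonneg hy hcξ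
  refine (ContinuousLinearMap.isPositive_iff_complex c).mpr fun v => ?_
  have hre : ⟪v, c v⟫_ℂ = (⟪v, c v⟫_ℂ).re := Complex.eq_re_of_ofReal_le (hnonneg v)
  rw [← inner_conj_symm, hre]
  simpa using (Complex.le_def.mp (hnonneg v)).1

theorem mapsTo_sharpCone_of_isPositive (hpM : p ∈ M) (hcomm : ∀ x ∈ M, p * x = x * p)
    (hpos : p.IsPositive) : Set.MapsTo p (sharpCone M ξ₀) (sharpCone M ξ₀) := by
  refine fun ζ hζ => map_mem_closure p.continuous hζ ?_
  rintro _ ⟨a, ha, ha_pos, rfl⟩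
  refine ⟨p * a, mul_mem hpM ha, ?_, rfl⟩
  rw [← ContinuousLinearMap.nonneg_iff_isPositive] at *
  exact Commute.mul_nonneg hpos ha_pos (hcomm a ha)

end SharpCone

theorem stmt12_general (M : VonNeumannAlgebra H) (ξ₀ : H)
    (hcyc : IsCyclicVector M ξ₀) (hsep : IsSeparatingVector M ξ₀) (p : H →L[ℂ] H) :
    ((p ∈ M ∧ ∀ x ∈ M, p * x = x * p) ∧ p.IsPositive ∧ (1 - p).IsPositive) ↔
      ((∀ ζ ∈ sharpCone M ξ₀, p ζ ∈ sharpCone M ξ₀) ∧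
       (∀ ζ ∈ sharpCone M ξ₀, (1 - p) ζ ∈ sharpCone M ξ₀)) := by
  constructor
  · rintro ⟨⟨hpM, hcomm⟩, hpos, hpos'⟩
    have hcomm' (x : H →L[ℂ] H) (hx : x ∈ M) : (1 - p) * x = x * (1 - p) := by
      rw [sub_mul, mul_sub, one_mul, mul_one, hcomm x hx]
    exact ⟨mapsTo_sharpCone_of_isPositive hpM hcomm hpos,
      mapsTo_sharpCone_of_isPositive (sub_mem (one_mem M) hpM) hcomm' hpos'⟩
  · rintro ⟨hp, hp'⟩
    have hpM' : p ∈ M.commutant :=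
      hcyc.mem_commutant_of_map_apply fun _ ha => hsep.map_apply hp hp' ha
    have hp_star (y : H →L[ℂ] H) (hy : y ∈ M.commutant) : y * p = star p * y :=
      hcyc.commutant_mul_eq_star_mul hpM' hp hy
    have hp_sa : star p = p := by simpa using (hp_star 1 (one_mem _)).symm
    have hpM : p ∈ M := mem_iff_forall_commutant_mul_eq.mpr fun y hy => by rw [hp_star y hy, hp_sa]
    have hξ₀ : ξ₀ ∈ sharpCone M ξ₀ :=
      apply_mem_sharpCone (one_mem M) (.of_isStarProjection (.one _))
    exact ⟨⟨hpM, fun x hx => (VonNeumannAlgebra.mem_commutant_iff.mp hpM' x hx).symm⟩,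
      hsep.isPositive_of_apply_mem_sharpCone hpM (hp ξ₀ hξ₀),
      hsep.isPositive_of_apply_mem_sharpCone (sub_mem (one_mem M) hpM) (hp' ξ₀ hξ₀)⟩

/-- An orthogonal projection `p` on `H` is a central projection of `M` if and
only if `p` and `1 - p` both preserve `P♯`. -/
theorem stmt12 (M : VonNeumannAlgebra H) (ξ₀ : H)
    (hcyc : IsCyclicVector M ξ₀) (hsep : IsSeparatingVector M ξ₀)
    (p : H →L[ℂ] H) (hp_sa : IsSelfAdjoint p) (hp_idem : p * p = p) :
    (p ∈ M ∧ ∀ x ∈ M, p * x = x * p) ↔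
      ((∀ ζ ∈ sharpCone M ξ₀, p ζ ∈ sharpCone M ξ₀) ∧
       (∀ ζ ∈ sharpCone M ξ₀, (1 - p) ζ ∈ sharpCone M ξ₀)) := by
  have hproj : IsStarProjection p := ⟨hp_idem, hp_sa⟩
  exact (and_iff_left ⟨.of_isStarProjection hproj, .of_isStarProjection hproj.one_sub⟩).symm.trans
    (stmt12_general M ξ₀ hcyc hsep p)
end

section
/- Let H be a complex Hilbert space, M a von Neumann algebra acting on H, and ξ₀ a cyclic and separating vector for M. If z ∈ M is self-adjoint and z ξ₀ ∈ P♯, then z is positive. -/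
open scoped InnerProductSpace
open Filter

variable {H : Type*} [NormedAddCommGroup H] [InnerProductSpace ℂ H] [CompleteSpace H]

/-!
If `y` commutes with `a ∈ M`, then `⟪a y ξ₀, y ξ₀⟫ = ⟪a ξ₀, y* y ξ₀⟫`, so the quadratic form of `a`
on `M' ξ₀` depends on `a` only through the vector `a ξ₀`, and continuously so. It is nonnegative for
positive `a`, hence it stays nonnegative when `a ξ₀` is replaced by a limit of such vectors, in
particular by `z ξ₀`. Since the projection onto the closure of `M' ξ₀` lies in `M'' = M` and fixes
the separating vector `ξ₀`, it is the identity: the quadratic form of `z` is nonnegative on a dense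
subspace, hence everywhere, and over `ℂ` this is positivity.
-/

/-- The subspace `M ξ = {x ξ : x ∈ M}` of `H`, not closed in general; `ξ` is cyclic for `M` when it
is dense. -/
noncomputable def orbitSubspace (M : VonNeumannAlgebra H) (ξ : H) : Submodule ℂ H :=
  M.toSubalgebra.toSubmodule.map (ContinuousLinearMap.apply ℂ H ξ : (H →L[ℂ] H) →ₗ[ℂ] H)

theorem mem_orbitSubspace {M : VonNeumannAlgebra H} {ξ ζ : H} :
    ζ ∈ orbitSubspace M ξ ↔ ∃ x ∈ M, x ξ = ζ :=
  Iff.rfl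

theorem self_mem_orbitSubspace (M : VonNeumannAlgebra H) (ξ : H) : ξ ∈ orbitSubspace M ξ :=
  mem_orbitSubspace.2 ⟨1, one_mem M, rfl⟩

theorem orbitSubspace_mem_invtSubmodule {M : VonNeumannAlgebra H} {x : H →L[ℂ] H} (hx : x ∈ M)
    (ξ : H) : orbitSubspace M ξ ∈ Module.End.invtSubmodule (x : H →ₗ[ℂ] H) := by
  rintro _ ⟨w, hw, rfl⟩
  exact mem_orbitSubspace.2 ⟨x * w, mul_mem hx hw, rfl⟩

theorem isCyclicVector_iff_dense_orbitSubspace {M : VonNeumannAlgebra H} {ξ : H} :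
    IsCyclicVector M ξ ↔ Dense (orbitSubspace M ξ : Set H) :=
  iff_of_eq congr(Dense ($(Submodule.span_eq (orbitSubspace M ξ)) : Set H))

theorem starProjection_mem_of_mem_invtSubmodule {M : VonNeumannAlgebra H} {K : Submodule ℂ H}
    [K.HasOrthogonalProjection]
    (hK : ∀ y ∈ M.commutant, K ∈ Module.End.invtSubmodule (y : H →ₗ[ℂ] H)) :
    K.starProjection ∈ M := by
  rw [VonNeumannAlgebra.IsStarProjection.mem_iff isStarProjection_starProjection,
    Submodule.range_starProjection]
  exact hK

theorem IsSeparatingVector.isCyclicVector_commutant_s16 {M : VonNeumannAlgebra H} {ξ₀ : H}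
    (hsep : IsSeparatingVector M ξ₀) : IsCyclicVector M.commutant ξ₀ := by
  set K := (orbitSubspace M.commutant ξ₀).topologicalClosure with hK
  have : CompleteSpace K := (Submodule.isClosed_topologicalClosure _).completeSpace_coe
  have hproj : K.starProjection ∈ M := starProjection_mem_of_mem_invtSubmodule fun y hy =>
    Submodule.topologicalClosure_mem_invtSubmodule (orbitSubspace_mem_invtSubmodule hy ξ₀)
  have hfix : K.starProjection ξ₀ = ξ₀ := Submodule.starProjection_eq_self_iff.2 <|
    Submodule.le_topologicalClosure _ (self_mem_orbitSubspace M.commutant ξ₀)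
  have hone : 1 - K.starProjection = 0 :=
    hsep _ (sub_mem (one_mem M) hproj) (sub_eq_zero.2 hfix.symm)
  rw [isCyclicVector_iff_dense_orbitSubspace, Submodule.dense_iff_topologicalClosure_eq_top, ← hK,
    Submodule.eq_top_iff']
  exact fun ζ => Submodule.starProjection_eq_self_iff.1 congr($(sub_eq_zero.1 hone) ζ).symm

section

open scoped ComplexOrder

theorem isPositive_of_dense_of_inner_nonneg {E : Type*} [NormedAddCommGroup E]
    [InnerProductSpace ℂ E] {T : E →L[ℂ] E} {s : Set E} (hs : Dense s)
    (hT : ∀ x ∈ s, 0 ≤ ⟪T x, x⟫_ℂ) : T.IsPositive := by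
  have hclosed : IsClosed {x : E | 0 ≤ ⟪T x, x⟫_ℂ} := isClosed_le continuous_const (by fun_prop)
  have hnonneg : ∀ x, 0 ≤ ⟪T x, x⟫_ℂ := hs.induction hT hclosed
  rw [ContinuousLinearMap.isPositive_iff_complex]
  exact fun x => ⟨(Complex.eq_re_of_ofReal_le (hnonneg x)).symm, (Complex.le_def.1 (hnonneg x)).1⟩

theorem inner_apply_apply_eq_of_commute {𝕜 E : Type*} [RCLike 𝕜] [NormedAddCommGroup E]
    [InnerProductSpace 𝕜 E] [CompleteSpace E] {a y : E →L[𝕜] E} (h : Commute a y) (ξ : E) :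
    ⟪a (y ξ), y ξ⟫_𝕜 = ⟪a ξ, (star y * y) ξ⟫_𝕜 :=
  calc ⟪a (y ξ), y ξ⟫_𝕜 = ⟪y (a ξ), y ξ⟫_𝕜 := congr(⟪$(h.eq) ξ, y ξ⟫_𝕜)
    _ = ⟪a ξ, (star y * y) ξ⟫_𝕜 := (ContinuousLinearMap.adjoint_inner_right y _ _).symm

theorem inner_nonneg_of_mem_sharpCone {M : VonNeumannAlgebra H} {ξ₀ ζ : H}
    (hζ : ζ ∈ sharpCone M ξ₀) {y : H →L[ℂ] H} (hy : y ∈ M.commutant) :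
    0 ≤ ⟪ζ, (star y * y) ξ₀⟫_ℂ := by
  have hclosed : IsClosed {ζ : H | 0 ≤ ⟪ζ, (star y * y) ξ₀⟫_ℂ} :=
    isClosed_le continuous_const (by fun_prop)
  refine closure_minimal ?_ hclosed hζ
  rintro _ ⟨a, haM, ha, rfl⟩
  have hcomm : Commute a y := VonNeumannAlgebra.mem_commutant_iff.1 hy a haM
  exact (ha.inner_nonneg_left (y ξ₀)).trans_eq (inner_apply_apply_eq_of_commute hcomm ξ₀)

theorem stmt16_general (M : VonNeumannAlgebra H) (ξ₀ : H) (hsep : IsSeparatingVector M ξ₀)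
    (z : H →L[ℂ] H) (hzM : z ∈ M) (hzξ : z ξ₀ ∈ sharpCone M ξ₀) : z.IsPositive := by
  have hdense : Dense (orbitSubspace M.commutant ξ₀ : Set H) :=
    isCyclicVector_iff_dense_orbitSubspace.1 hsep.isCyclicVector_commutant_s16
  refine isPositive_of_dense_of_inner_nonneg hdense ?_
  rintro _ ⟨y, hy, rfl⟩
  have hcomm : Commute z y := VonNeumannAlgebra.mem_commutant_iff.1 hy z hzM
  exact (inner_nonneg_of_mem_sharpCone hzξ hy).trans_eq
    (inner_apply_apply_eq_of_commute hcomm ξ₀).symm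

end

/-- If `z ∈ M` is self-adjoint and `z ξ₀ ∈ P♯`, then `z` is positive. -/
theorem stmt16 (M : VonNeumannAlgebra H) (ξ₀ : H)
    (hcyc : IsCyclicVector M ξ₀) (hsep : IsSeparatingVector M ξ₀)
    (z : H →L[ℂ] H) (hzM : z ∈ M) (hz_sa : IsSelfAdjoint z)
    (hzξ : z ξ₀ ∈ sharpCone M ξ₀) :
    z.IsPositive := by
  exact stmt16_general M ξ₀ hsep z hzM hzξ
end
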